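/- In the setting above, suppose λ ∈ Π⁺ and there exists ω ∈ Ω_K with ⟨ω, λ_K⟩ = 0, where λ_K ∈ ℚ⁴ is the K-component of λ and the pairing is via the ℂ-bilinear extension of the form of K. Then λ = w' − (0,r) or λ = −w' − (0,r); that is, the K-component of λ equals ±w' and the E-component of λ equals −r. -/

import Mathlib

/-!
STATEMENT 15: In the level-2 setting (Cases A and B), if `λ ∈ Π⁺` and there
is `ω ∈ Ω_K` with `⟨ω, λ_K⟩ = 0`, then `λ = w' − (0,r)` or `λ = −w' − (0,r)`.
-/

noncomputable section
namespace Stmt15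

/-- The bilinear form of K = U(2) ⊕ U(2) on ℚ⁴ (ℚ-bilinear extension):
Gram matrix has blocks [[0,2],[2,0]] and [[0,2],[2,0]]. -/
def bK (x y : Fin 4 → ℚ) : ℚ :=
  2 * (x 0 * y 1 + x 1 * y 0) + 2 * (x 2 * y 3 + x 3 * y 2)

/-- The bilinear form of E = E8(2) on ℚ⁸ (ℚ-bilinear extension):
Gram matrix is −2 times the E8 Cartan matrix. -/
def bE (x y : Fin 8 → ℚ) : ℚ :=
  ∑ i : Fin 8, ∑ j : Fin 8, x i * ((-2 * CartanMatrix.E₈ i j : ℤ) : ℚ) * y j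

/-- `x` lies in the lattice ℤ⁴ ⊂ ℚ⁴. -/
def isInt4 (x : Fin 4 → ℚ) : Prop := ∀ i, ∃ n : ℤ, x i = n

/-- `x` lies in the lattice ℤ⁸ ⊂ ℚ⁸. -/
def isInt8 (x : Fin 8 → ℚ) : Prop := ∀ i, ∃ n : ℤ, x i = n

/-- `x` lies in the dual lattice (1/2)ℤ⁴ ⊂ ℚ⁴ of K. -/
def isHalf4 (x : Fin 4 → ℚ) : Prop := ∀ i, ∃ n : ℤ, x i = n / 2

/-- `x` lies in the dual lattice (1/2)ℤ⁸ ⊂ ℚ⁸ of E. -/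
def isHalf8 (x : Fin 8 → ℚ) : Prop := ∀ i, ∃ n : ℤ, x i = n / 2

/-- The ambient space ℚ⁴ ⊕ ℚ⁸ of K ⊕ E. -/
abbrev V : Type := (Fin 4 → ℚ) × (Fin 8 → ℚ)

/-- The orthogonal direct sum form of K ⊕ E on ℚ⁴ ⊕ ℚ⁸. -/
def bV (x y : V) : ℚ := bK x.1 y.1 + bE x.2 y.2

/-- Membership in the lattice Λ' = ℤ·(d₁,d₂) + (ℤ⁴ ⊕ ℤ⁸) ⊂ ℚ⁴ ⊕ ℚ⁸. -/
def memL (d₁ : Fin 4 → ℚ) (d₂ : Fin 8 → ℚ) (x : V) : Prop :=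
  ∃ n : ℤ, isInt4 (x.1 - (n : ℚ) • d₁) ∧ isInt8 (x.2 - (n : ℚ) • d₂)

/-- The ℂ-bilinear extension of the form of K to ℂ⁴. -/
def bKC (x y : Fin 4 → ℂ) : ℂ :=
  2 * (x 0 * y 1 + x 1 * y 0) + 2 * (x 2 * y 3 + x 3 * y 2)

/-- The period domain Ω_K: ω ∈ ℂ⁴ with ⟨ω,ω⟩ = 0 and ⟨ω,ω̄⟩ a positive real. -/
def OmegaK (ω : Fin 4 → ℂ) : Prop :=
  bKC ω ω = 0 ∧ ∃ t : ℝ, 0 < t ∧ bKC ω (fun i => (starRingEnd ℂ) (ω i)) = (t : ℂ)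

/-- Coercion ℚ⁴ → ℂ⁴. -/
def qc (x : Fin 4 → ℚ) : Fin 4 → ℂ := fun i => ((x i : ℚ) : ℂ)

/-- `v = ((1,0,0,0), 0)`. -/
def v : V := (![1, 0, 0, 0], 0)

/-- `w = ((0,0,−1,0), 0)`. -/
def w : V := (![0, 0, -1, 0], 0)

/-!
Since `⟨ω, ω⟩ = 0` and `⟨ω, ω̄⟩ > 0`, the vectors `Re ω` and `Im ω` span a positive definite plane
in `K ⊗ ℝ`, which has signature `(2, 2)`. Hence the form is negative definite on the orthogonal
complement of that plane, and `λ_K` is zero or has negative norm. Likewise `E` is negative definite.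

If `λ` lies in `K ⊕ E`, whose norms on either summand are multiples of `4`, then
`⟨λ, λ⟩ ≥ -2` forces `λ = 0`, against `⟨λ, ρ⟩ > 0`. Otherwise `λ` lies in the other coset of
`K ⊕ E` in `Λ'`. Both components are then nonzero and of negative integral norm, so both have
norm `-1`. In `v^⊥ ∩ v'^⊥` the only possibilities for `λ_K` are `±w'`. These are orthogonal to
`w + w'`, so `⟨λ_E, r⟩ = ⟨λ, ρ⟩ > 0`. Thus `λ_E + r` is an integral vector of norm greater than
`-4`, and it vanishes: `λ_E = -r`.
-/

section Signature

variable {F M : Type*} [Field F] [LinearOrder F] [IsStrictOrderedRing F] [AddCommGroup M]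
  [Module F M] [FiniteDimensional F M]

theorem eq_zero_of_orthogonal_of_nonneg (B : LinearMap.BilinForm F M) (hB : B.IsSymm)
    {P N : Submodule F M} (hP : ∀ y ∈ P, y ≠ 0 → 0 < B y y) (hN : ∀ y ∈ N, y ≠ 0 → B y y < 0)
    (hdim : Module.finrank F M ≤ Module.finrank F P + Module.finrank F N)
    {x : M} (hx : ∀ y ∈ P, B y x = 0) (hxx : 0 ≤ B x x) : x = 0 := by
  have hsup : ∀ y ∈ P ⊔ Submodule.span F {x}, 0 ≤ B y y := by
    intro y hy
    obtain ⟨p, hp, q, hq, rfl⟩ := Submodule.mem_sup.1 hy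
    obtain ⟨a, rfl⟩ := Submodule.mem_span_singleton.1 hq
    have hpp : 0 ≤ B p p := by
      rcases eq_or_ne p 0 with rfl | hp0
      · simp
      · exact (hP p hp hp0).le
    have hexpand : B (p + a • x) (p + a • x) = B p p + a ^ 2 * B x x := by
      simp only [map_add, LinearMap.add_apply, map_smul, LinearMap.smul_apply, smul_eq_mul,
        hx p hp, hB.eq p x ▸ hx p hp]
      ring
    rw [hexpand]
    positivity
  have hdisj : Disjoint (P ⊔ Submodule.span F {x}) N := by
    rw [Submodule.disjoint_def]
    intro y hy hyN
    by_contra hy0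
    exact (hN y hyN hy0).not_ge (hsup y hy)
  have hfin := Submodule.finrank_add_finrank_le_of_disjoint hdisj
  have hP_eq : P = P ⊔ Submodule.span F {x} :=
    Submodule.eq_of_le_of_finrank_le le_sup_left (by omega)
  have hxP : x ∈ P := hP_eq ▸ Submodule.mem_sup_right (Submodule.mem_span_singleton_self x)
  by_contra hx0
  exact (hP x hxP hx0).ne' (hx x hxP)

end Signature

section Glue

variable {G : Type*} [AddCommGroup G] {L : AddSubgroup G} {x d : G}

theorem mem_or_sub_mem_of_sub_zsmul_mem {n : ℤ} (hd : 2 • d ∈ L) (hx : x - n • d ∈ L) :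
    x ∈ L ∨ x - d ∈ L := by
  rcases Int.even_or_odd' n with ⟨m, rfl | rfl⟩
  · left
    convert add_mem hx (zsmul_mem hd m) using 1
    module
  · right
    convert add_mem hx (zsmul_mem hd m) using 1
    module

theorem two_nsmul_mem_of_sub_mem (hd : 2 • d ∈ L) (hx : x - d ∈ L) : 2 • x ∈ L := by
  convert add_mem (nsmul_mem hx 2) hd using 1
  module

theorem add_mem_of_sub_mem (hd : 2 • d ∈ L) (hx : x - d ∈ L) : x + d ∈ L := by
  convert add_mem hx hd using 1
  module

theorem ne_zero_of_sub_mem (hd : d ∉ L) (hx : x - d ∈ L) : x ≠ 0 := by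
  rintro rfl
  exact hd (by simpa using hx)

end Glue

/-! ### The period plane in `K ⊗ ℝ` -/

/-- The form of `K ⊗ ℝ`, the space in which the real and imaginary parts of periods lie. -/
def realK : LinearMap.BilinForm ℝ (Fin 4 → ℝ) :=
  Matrix.toBilin' !![0, 2, 0, 0; 2, 0, 0, 0; 0, 0, 0, 2; 0, 0, 2, 0]

theorem realK_apply (x y : Fin 4 → ℝ) :
    realK x y = 2 * (x 0 * y 1 + x 1 * y 0) + 2 * (x 2 * y 3 + x 3 * y 2) := by
  simp only [realK, Matrix.toBilin'_apply, Matrix.of_apply, Matrix.cons_val',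
    Matrix.cons_val_fin_one, Fin.sum_univ_four, Matrix.cons_val_zero, Matrix.cons_val_one,
    Matrix.cons_val, mul_zero, zero_mul, zero_add, add_zero]
  ring

theorem realK_isSymm : realK.IsSymm :=
  ⟨fun x y => by simp only [realK_apply]; ring⟩

/-- The parametrization `z ↦ Re (z ω)` of the plane spanned by `Re ω` and `Im ω`. -/
def periodMap (ω : Fin 4 → ℂ) : ℂ →ₗ[ℝ] (Fin 4 → ℝ) :=
  LinearMap.pi fun i => Complex.reLm ∘ₗ LinearMap.mulRight ℝ (ω i)

theorem periodMap_apply (ω : Fin 4 → ℂ) (z : ℂ) (i : Fin 4) :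
    periodMap ω z i = (z * ω i).re := rfl

theorem realK_periodMap_self (ω : Fin 4 → ℂ) (z : ℂ) :
    realK (periodMap ω z) (periodMap ω z) =
      (z ^ 2 * bKC ω ω + Complex.normSq z * bKC ω (fun i => (starRingEnd ℂ) (ω i))).re / 2 := by
  simp only [realK_apply, periodMap_apply, Complex.mul_re, pow_two, bKC, Complex.normSq_apply,
    Complex.ofReal_add, Complex.ofReal_mul, Complex.add_re, Complex.re_ofNat, Complex.im_ofNat,
    Complex.add_im, Complex.mul_im, zero_mul, sub_zero, add_zero, Complex.ofReal_re,
    Complex.ofReal_im, mul_zero, Complex.conj_re, Complex.conj_im, mul_neg, sub_neg_eq_add]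
  ring

theorem realK_periodMap_ratCast (ω : Fin 4 → ℂ) (z : ℂ) (x : Fin 4 → ℚ) :
    realK (periodMap ω z) (fun i => (x i : ℝ)) = (z * bKC ω (qc x)).re := by
  simp only [realK_apply, periodMap_apply, Complex.mul_re, bKC, qc, Complex.add_re,
    Complex.re_ofNat, Complex.ratCast_re, Complex.ratCast_im, mul_zero, sub_zero, Complex.im_ofNat,
    Complex.add_im, Complex.mul_im, zero_add, zero_mul, add_zero]
  ring

theorem realK_ratCast_self (x : Fin 4 → ℚ) :
    realK (fun i => (x i : ℝ)) (fun i => (x i : ℝ)) = (bK x x : ℝ) := by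
  simp [realK_apply, bK]

/-- The sums of the two coordinates in each of the hyperbolic summands of `K ⊗ ℝ`; its kernel, the
pairs of antidiagonals, serves as a negative definite plane. -/
def antidiagonalMap : (Fin 4 → ℝ) →ₗ[ℝ] ℝ × ℝ :=
  let coord (i : Fin 4) : (Fin 4 → ℝ) →ₗ[ℝ] ℝ := LinearMap.proj i
  (coord 0 + coord 1).prod (coord 2 + coord 3)

theorem mem_ker_antidiagonalMap {y : Fin 4 → ℝ} :
    y ∈ LinearMap.ker antidiagonalMap ↔ y 0 + y 1 = 0 ∧ y 2 + y 3 = 0 := by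
  simp [antidiagonalMap]

theorem two_le_finrank_ker_antidiagonalMap :
    2 ≤ Module.finrank ℝ (LinearMap.ker antidiagonalMap) := by
  have hrank := antidiagonalMap.finrank_range_add_finrank_ker
  have hrange := Submodule.finrank_le (LinearMap.range antidiagonalMap)
  simp only [Module.finrank_prod, Module.finrank_self, Module.finrank_fin_fun] at hrank hrange
  omega

theorem realK_self_neg_of_mem_ker_antidiagonalMap {y : Fin 4 → ℝ}
    (hy : y ∈ LinearMap.ker antidiagonalMap) (hy0 : y ≠ 0) : realK y y < 0 := by
  obtain ⟨h01, h23⟩ := mem_ker_antidiagonalMap.1 hy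
  have hnorm : realK y y = -4 * (y 0 ^ 2 + y 2 ^ 2) := by
    rw [realK_apply, eq_neg_of_add_eq_zero_right h01, eq_neg_of_add_eq_zero_right h23]
    ring
  by_contra! hnonneg
  have h0 : y 0 = 0 := by nlinarith
  have h2 : y 2 = 0 := by nlinarith
  apply hy0
  ext i
  fin_cases i <;>
    simp only [Fin.zero_eta, Fin.mk_one, Fin.reduceFinMk, Pi.zero_apply] <;>
    linarith

namespace OmegaK

variable {ω : Fin 4 → ℂ}

theorem realK_periodMap_self_pos (hω : OmegaK ω) {z : ℂ} (hz : z ≠ 0) :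
    0 < realK (periodMap ω z) (periodMap ω z) := by
  obtain ⟨hωω, t, ht, hωt⟩ := hω
  rw [realK_periodMap_self, hωω, hωt, mul_zero, zero_add, ← Complex.ofReal_mul,
    Complex.ofReal_re]
  have := Complex.normSq_pos.2 hz
  positivity

theorem finrank_range_periodMap (hω : OmegaK ω) :
    Module.finrank ℝ (LinearMap.range (periodMap ω)) = 2 := by
  rw [LinearMap.finrank_range_of_inj, Complex.finrank_real_complex]
  refine (injective_iff_map_eq_zero _).2 fun z hz => ?_
  by_contra hz0
  simpa [hz] using hω.realK_periodMap_self_pos hz0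

theorem bK_self_neg (hω : OmegaK ω) {x : Fin 4 → ℚ} (hx : bKC ω (qc x) = 0) (hx0 : x ≠ 0) :
    bK x x < 0 := by
  by_contra! hxx
  have hcast : (fun i => (x i : ℝ)) = 0 := by
    refine eq_zero_of_orthogonal_of_nonneg realK realK_isSymm
      (P := LinearMap.range (periodMap ω)) (N := LinearMap.ker antidiagonalMap) ?_
      (fun _ => realK_self_neg_of_mem_ker_antidiagonalMap) ?_ ?_ ?_
    · rintro _ ⟨z, rfl⟩ hz
      exact hω.realK_periodMap_self_pos fun h => hz (by rw [h, map_zero])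
    · have := two_le_finrank_ker_antidiagonalMap
      rw [hω.finrank_range_periodMap, Module.finrank_fin_fun]
      omega
    · rintro _ ⟨z, rfl⟩
      rw [realK_periodMap_ratCast, hx, mul_zero, Complex.zero_re]
    · rw [realK_ratCast_self]
      exact_mod_cast hxx
  exact hx0 (funext fun i => Rat.cast_eq_zero.1 (congrFun hcast i))

theorem bK_self_nonpos (hω : OmegaK ω) {x : Fin 4 → ℚ} (hx : bKC ω (qc x) = 0) :
    bK x x ≤ 0 := by
  rcases eq_or_ne x 0 with rfl | hx0
  · simp [bK]
  · exact (hω.bK_self_neg hx hx0).le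

end OmegaK

/-! ### The negative definite form of `E` -/

/-- Half of the quadratic form of the E8 Cartan matrix, so that `⟨x, x⟩ = -4 * e8Quad x` in `E`.
The coefficient ring is arbitrary in order to pass between `ℤ` and `ℚ`. -/
def e8Quad {R : Type*} [CommRing R] (x : Fin 8 → R) : R :=
  x 0 ^ 2 + x 1 ^ 2 + x 2 ^ 2 + x 3 ^ 2 + x 4 ^ 2 + x 5 ^ 2 + x 6 ^ 2 + x 7 ^ 2
    - x 0 * x 2 - x 2 * x 3 - x 1 * x 3 - x 3 * x 4 - x 4 * x 5 - x 5 * x 6 - x 6 * x 7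

theorem bE_self (x : Fin 8 → ℚ) : bE x x = -4 * e8Quad x := by
  simp only [bE, Int.reduceNeg, CartanMatrix.E₈, Matrix.of_apply, Matrix.cons_val',
    Matrix.cons_val_fin_one, neg_mul, Int.cast_neg, Int.cast_mul, Int.cast_ofNat, mul_neg,
    Finset.sum_neg_distrib, Fin.sum_univ_eight, Matrix.cons_val_zero, Matrix.cons_val_one,
    Matrix.cons_val, neg_add_rev, Int.cast_zero, mul_zero, zero_mul, neg_zero, Int.cast_one,
    mul_one, neg_neg, zero_add, add_zero, e8Quad]
  ring

theorem bE_add_self (x y : Fin 8 → ℚ) :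
    bE (x + y) (x + y) = bE x x + 2 * bE x y + bE y y := by
  simp only [bE, Pi.add_apply, Int.reduceNeg, CartanMatrix.E₈, Matrix.of_apply, Matrix.cons_val',
    Matrix.cons_val_fin_one, neg_mul, Int.cast_neg, Int.cast_mul, Int.cast_ofNat, mul_neg,
    Finset.sum_neg_distrib, Fin.sum_univ_eight, Matrix.cons_val_zero, Matrix.cons_val_one,
    Matrix.cons_val, neg_add_rev, Int.cast_zero, mul_zero, zero_mul, neg_zero, Int.cast_one,
    mul_one, neg_neg, zero_add, add_zero]
  ring

theorem bE_zero_right (x : Fin 8 → ℚ) : bE x 0 = 0 := by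
  simp [bE]

-- Complete squares along each arm of the Dynkin diagram, from its end to the branch node `3`.
theorem e8Quad_eq_sum_sq (x : Fin 8 → ℚ) :
    e8Quad x = (x 0 - x 2 / 2) ^ 2 + 3 / 4 * (x 2 - 2 / 3 * x 3) ^ 2 + (x 1 - x 3 / 2) ^ 2
      + (x 7 - x 6 / 2) ^ 2 + 3 / 4 * (x 6 - 2 / 3 * x 5) ^ 2 + 2 / 3 * (x 5 - 3 / 4 * x 4) ^ 2
      + 5 / 8 * (x 4 - 4 / 5 * x 3) ^ 2 + 1 / 60 * x 3 ^ 2 := by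
  unfold e8Quad
  ring

theorem e8Quad_pos {x : Fin 8 → ℚ} (hx : x ≠ 0) : 0 < e8Quad x := by
  have hnonneg : 0 ≤ e8Quad x := by
    rw [e8Quad_eq_sum_sq]
    positivity
  refine hnonneg.lt_of_ne' fun hzero => hx ?_
  rw [e8Quad_eq_sum_sq] at hzero
  simp (disch := positivity) only [add_eq_zero_iff_of_nonneg, mul_eq_zero, pow_eq_zero_iff] at hzero
  norm_num at hzero
  obtain ⟨⟨⟨⟨⟨⟨⟨h0, h2⟩, h1⟩, h7⟩, h6⟩, h5⟩, h4⟩, h3⟩ := hzero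
  ext i
  fin_cases i <;>
    simp only [Fin.zero_eta, Fin.mk_one, Fin.reduceFinMk, Pi.zero_apply] <;>
    linarith

theorem bE_self_neg {x : Fin 8 → ℚ} (hx : x ≠ 0) : bE x x < 0 := by
  rw [bE_self]
  linarith [e8Quad_pos hx]

theorem bE_self_nonpos (x : Fin 8 → ℚ) : bE x x ≤ 0 := by
  rcases eq_or_ne x 0 with rfl | hx
  · rw [bE_zero_right]
  · exact (bE_self_neg hx).le

/-! ### Integrality of norms -/

/-- The lattice `ℤ^ι` in `ℚ^ι`, which underlies both `K` and `E`. Membership in the dual lattice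
`(1/2)ℤ^ι` is expressed as `2 • x ∈ intLattice ι`. -/
def intLattice (ι : Type*) : AddSubgroup (ι → ℚ) :=
  AddSubgroup.pi Set.univ fun _ => (Int.castAddHom ℚ).range

theorem mem_intLattice {ι : Type*} {x : ι → ℚ} :
    x ∈ intLattice ι ↔ ∀ i, ∃ n : ℤ, x i = n := by
  simp only [intLattice, AddSubgroup.mem_pi, Set.mem_univ, true_imp_iff, AddMonoidHom.mem_range,
    Int.coe_castAddHom, eq_comm]

theorem two_nsmul_mem_intLattice {ι : Type*} {x : ι → ℚ} :
    2 • x ∈ intLattice ι ↔ ∀ i, ∃ n : ℤ, x i = n / 2 := by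
  rw [mem_intLattice]
  refine forall_congr' fun i => exists_congr fun n => ?_
  rw [Pi.smul_apply, nsmul_eq_mul', Nat.cast_ofNat, eq_div_iff two_ne_zero]

theorem exists_bK_self_eq_four_mul {x : Fin 4 → ℚ} (hx : x ∈ intLattice (Fin 4)) :
    ∃ m : ℤ, bK x x = 4 * m := by
  choose n hn using mem_intLattice.1 hx
  refine ⟨n 0 * n 1 + n 2 * n 3, ?_⟩
  simp only [bK, hn]
  push_cast
  ring

theorem exists_bE_self_eq_four_mul {x : Fin 8 → ℚ} (hx : x ∈ intLattice (Fin 8)) :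
    ∃ m : ℤ, bE x x = 4 * m := by
  choose n hn using mem_intLattice.1 hx
  refine ⟨-e8Quad n, ?_⟩
  simp only [bE_self, e8Quad, hn]
  push_cast
  ring

theorem exists_bK_self_eq_intCast {x : Fin 4 → ℚ} (hx : 2 • x ∈ intLattice (Fin 4)) :
    ∃ m : ℤ, bK x x = m := by
  obtain ⟨m, hm⟩ := exists_bK_self_eq_four_mul hx
  have hscale : bK (2 • x) (2 • x) = 4 * bK x x := by
    simp only [bK, Pi.smul_apply, nsmul_eq_mul, Nat.cast_ofNat]
    ring
  exact ⟨m, by linarith⟩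

theorem exists_bE_self_eq_intCast {x : Fin 8 → ℚ} (hx : 2 • x ∈ intLattice (Fin 8)) :
    ∃ m : ℤ, bE x x = m := by
  obtain ⟨m, hm⟩ := exists_bE_self_eq_four_mul hx
  have hscale : bE (2 • x) (2 • x) = 4 * bE x x := by
    simp only [bE_self, e8Quad, nsmul_eq_mul, Nat.cast_ofNat, Pi.mul_apply, Pi.ofNat_apply]
    ring
  exact ⟨m, by linarith⟩

theorem le_neg_one_of_eq_intCast_of_neg {a : ℚ} (ha : ∃ m : ℤ, a = m) (hneg : a < 0) :
    a ≤ -1 := by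
  obtain ⟨m, rfl⟩ := ha
  have hm : m < 0 := by exact_mod_cast hneg
  exact_mod_cast Int.le_sub_one_of_lt hm

theorem le_neg_four_of_eq_four_mul_of_neg {a : ℚ} (ha : ∃ m : ℤ, a = 4 * m) (hneg : a < 0) :
    a ≤ -4 := by
  obtain ⟨m, rfl⟩ := ha
  linarith [le_neg_one_of_eq_intCast_of_neg ⟨m, rfl⟩ (by linarith : (m : ℚ) < 0)]

theorem eq_zero_of_neg_four_lt_bE_self {x : Fin 8 → ℚ} (hx : x ∈ intLattice (Fin 8))
    (hnorm : -4 < bE x x) : x = 0 := by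
  by_contra hx0
  exact hnorm.not_ge
    (le_neg_four_of_eq_four_mul_of_neg (exists_bE_self_eq_four_mul hx) (bE_self_neg hx0))

theorem notMem_intLattice_of_bE_self_mem_Ioo {x : Fin 8 → ℚ} (hx : bE x x ∈ Set.Ioo (-4) 0) :
    x ∉ intLattice (Fin 8) := by
  intro hint
  have hneg := hx.2
  rw [eq_zero_of_neg_four_lt_bE_self hint hx.1, bE_zero_right] at hneg
  exact lt_irrefl 0 hneg

namespace OmegaK

variable {ω : Fin 4 → ℂ} {lam : V}

theorem eq_zero_of_neg_four_lt_bV_self (hω : OmegaK ω) (horth : bKC ω (qc lam.1) = 0)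
    (hK : lam.1 ∈ intLattice (Fin 4)) (hE : lam.2 ∈ intLattice (Fin 8))
    (hnorm : -4 < bV lam lam) : lam = 0 := by
  have hK_nonpos := hω.bK_self_nonpos horth
  have hE_nonpos := bE_self_nonpos lam.2
  unfold bV at hnorm
  refine Prod.ext ?_ (eq_zero_of_neg_four_lt_bE_self hE (by linarith))
  by_contra hK0
  linarith [le_neg_four_of_eq_four_mul_of_neg (exists_bK_self_eq_four_mul hK)
    (hω.bK_self_neg horth hK0)]

theorem norms_eq_neg_one (hω : OmegaK ω) (horth : bKC ω (qc lam.1) = 0)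
    (hK : 2 • lam.1 ∈ intLattice (Fin 4)) (hE : 2 • lam.2 ∈ intLattice (Fin 8))
    (hK0 : lam.1 ≠ 0) (hE0 : lam.2 ≠ 0) (hnorm : -2 ≤ bV lam lam) :
    bK lam.1 lam.1 = -1 ∧ bE lam.2 lam.2 = -1 := by
  have hK_le := le_neg_one_of_eq_intCast_of_neg (exists_bK_self_eq_intCast hK)
    (hω.bK_self_neg horth hK0)
  have hE_le := le_neg_one_of_eq_intCast_of_neg (exists_bE_self_eq_intCast hE) (bE_self_neg hE0)
  unfold bV at hnorm
  constructor <;> linarith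

end OmegaK

/-! ### The family of lattices `Λ'` -/

/-- The `K`-component of the glue vector of `Λ'`; Cases A and B are `c = 0` and `c = 1`. -/
def glueK (c : ℚ) : Fin 4 → ℚ := ![c / 2, 0, 1 / 2, 1 / 2]

/-- The isotropic vector `v'`; Cases A and B are `c = 0` and `c = 1`. -/
def isotropicVec (c : ℚ) : V := (![0, 1, c, 0], 0)

/-- The vector `w'` of norm `-1`; Cases A and B are `c = 0` and `c = 1`. -/
def negOneVec (c : ℚ) : V := (![c / 2, 0, 1 / 2, -(1 / 2)], 0)

theorem two_nsmul_glueK_mem (c : ℤ) : 2 • glueK c ∈ intLattice (Fin 4) := by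
  rw [two_nsmul_mem_intLattice]
  intro i
  fin_cases i
  exacts [⟨c, rfl⟩, ⟨0, by simp [glueK]⟩, ⟨1, by simp [glueK]⟩, ⟨1, by simp [glueK]⟩]

theorem glueK_notMem_intLattice (c : ℚ) : glueK c ∉ intLattice (Fin 4) := by
  intro h
  obtain ⟨n, hn⟩ := mem_intLattice.1 h 2
  have htwo : (2 * n : ℚ) = 1 := by rw [← hn]; simp [glueK]
  have : 2 * n = 1 := by exact_mod_cast htwo
  omega

theorem memL_integral_or_glue {d : Fin 4 → ℚ} {r : Fin 8 → ℚ} {lam : V}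
    (hd : 2 • d ∈ intLattice (Fin 4)) (hr : 2 • r ∈ intLattice (Fin 8)) (hmem : memL d r lam) :
    (lam.1 ∈ intLattice (Fin 4) ∧ lam.2 ∈ intLattice (Fin 8)) ∨
      (lam.1 - d ∈ intLattice (Fin 4) ∧ lam.2 - r ∈ intLattice (Fin 8)) := by
  obtain ⟨n, hK, hE⟩ := hmem
  refine mem_or_sub_mem_of_sub_zsmul_mem
    (L := (intLattice (Fin 4)).prod (intLattice (Fin 8))) (d := (d, r)) (n := n) ⟨hd, hr⟩ ?_
  rw [Int.cast_smul_eq_zsmul] at hK hE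
  exact ⟨mem_intLattice.2 hK, mem_intLattice.2 hE⟩

theorem bV_of_snd_eq_zero {x y : V} (hy : y.2 = 0) : bV x y = bK x.1 y.1 := by
  rw [bV, hy, bE_zero_right, add_zero]

theorem eq_or_eq_neg_negOneVec {c : ℚ} {x : Fin 4 → ℚ} (hhalf : 2 • x ∈ intLattice (Fin 4))
    (hv : bK x v.1 = 0) (hv' : bK x (isotropicVec c).1 = 0) (hnorm : bK x x = -1) :
    x = (negOneVec c).1 ∨ x = -(negOneVec c).1 := by
  have h1 : x 1 = 0 := by simpa [bK, v] using hv
  have h0 : x 0 = -(c * x 3) := by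
    simp only [bK, isotropicVec, h1, Matrix.cons_val] at hv'
    linarith
  choose n hn using two_nsmul_mem_intLattice.1 hhalf
  have hprod : n 2 * n 3 = -1 := by
    have : (n 2 * n 3 : ℚ) = -1 := by
      simp only [bK, h1, hn 2, hn 3] at hnorm
      linear_combination hnorm
    exact_mod_cast this
  rcases Int.mul_eq_neg_one_iff_eq_one_or_neg_one.1 hprod with ⟨h2, h3⟩ | ⟨h2, h3⟩
  · left
    ext i
    fin_cases i <;>
      simp only [negOneVec, h0, h1, hn 2, hn 3, h2, h3, Fin.zero_eta, Fin.mk_one,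
        Fin.reduceFinMk, Int.reduceNeg, Int.cast_neg, Int.cast_one, Matrix.cons_val] <;>
      ring
  · right
    ext i
    fin_cases i <;>
      simp only [negOneVec, h0, h1, hn 2, hn 3, h2, h3, Fin.zero_eta, Fin.mk_one,
        Fin.reduceFinMk, Int.reduceNeg, Int.cast_neg, Int.cast_one, Pi.neg_apply,
        Matrix.cons_val] <;>
      ring

theorem bK_negOneVec_add (c : ℚ) : bK (negOneVec c).1 (w + negOneVec c).1 = 0 := by
  simp only [bK, negOneVec, w, Prod.fst_add, Pi.add_apply, Matrix.cons_val]
  norm_num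

theorem bK_neg_left (x y : Fin 4 → ℚ) : bK (-x) y = -bK x y := by
  simp only [bK, Pi.neg_apply]
  ring

theorem bV_rho_eq_bE {c : ℚ} {lam : V}
    (hK : lam.1 = (negOneVec c).1 ∨ lam.1 = -(negOneVec c).1) (r : Fin 8 → ℚ) :
    bV lam (w + negOneVec c + ((0 : Fin 4 → ℚ), r)) = bE lam.2 r := by
  have hρ : w + negOneVec c + ((0 : Fin 4 → ℚ), r) = ((w + negOneVec c).1, r) :=
    Prod.ext (add_zero _) (by simp [w, negOneVec])
  have hKρ : bK lam.1 (w + negOneVec c).1 = 0 := by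
    rcases hK with h | h
    · rw [h, bK_negOneVec_add]
    · rw [h, bK_neg_left, bK_negOneVec_add, neg_zero]
  rw [hρ, bV, hKρ, zero_add]

theorem eq_neg_of_bE_pos {r e : Fin 8 → ℚ} (hint : e + r ∈ intLattice (Fin 8))
    (hnorms : -4 ≤ bE e e + bE r r) (hpos : 0 < bE e r) : e = -r := by
  refine eq_neg_of_add_eq_zero_left (eq_zero_of_neg_four_lt_bE_self hint ?_)
  rw [bE_add_self]
  linarith

theorem statement15_general (r : Fin 8 → ℚ) (hr : isHalf8 r) (hrr : bE r r = -1) (c : ℤ)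
    (lam : V) (hmem : memL (glueK c) r lam) (hv : bV lam v = 0)
    (hv' : bV lam (isotropicVec c) = 0)
    (hpos : 0 < bV lam (w + negOneVec c + ((0 : Fin 4 → ℚ), r)))
    (hnorm : -2 ≤ bV lam lam)
    (hω : ∃ ω : Fin 4 → ℂ, OmegaK ω ∧ bKC ω (qc lam.1) = 0) :
    lam = negOneVec c - ((0 : Fin 4 → ℚ), r) ∨ lam = -negOneVec c - ((0 : Fin 4 → ℚ), r) := by
  obtain ⟨ω, hω, horth⟩ := hω
  have hr_half : 2 • r ∈ intLattice (Fin 8) := two_nsmul_mem_intLattice.2 hr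
  rcases memL_integral_or_glue (two_nsmul_glueK_mem c) hr_half hmem with ⟨hK, hE⟩ | ⟨hK, hE⟩
  · have hlam : lam = 0 := hω.eq_zero_of_neg_four_lt_bV_self horth hK hE (by linarith)
    simp [hlam, bV, bK, bE] at hpos
  · have hK_half := two_nsmul_mem_of_sub_mem (two_nsmul_glueK_mem c) hK
    have hE_half := two_nsmul_mem_of_sub_mem hr_half hE
    have hK0 := ne_zero_of_sub_mem (glueK_notMem_intLattice c) hK
    have hE0 :=
      ne_zero_of_sub_mem (notMem_intLattice_of_bE_self_mem_Ioo (by norm_num [hrr])) hE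
    obtain ⟨hKK, hEE⟩ := hω.norms_eq_neg_one horth hK_half hE_half hK0 hE0 hnorm
    rw [bV_of_snd_eq_zero rfl] at hv hv'
    have hpm := eq_or_eq_neg_negOneVec hK_half hv hv' hKK
    rw [bV_rho_eq_bE hpm] at hpos
    have hlamE : lam.2 = -r :=
      eq_neg_of_bE_pos (add_mem_of_sub_mem hr_half hE) (by linarith) hpos
    refine hpm.imp (fun h => Prod.ext ?_ ?_) (fun h => Prod.ext ?_ ?_) <;>
      simp [h, hlamE, negOneVec]

theorem statement15 (r : Fin 8 → ℚ)
    (hr : isHalf8 r) (hr' : ¬ isInt8 r) (hrr : bE r r = -1)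
    (d₁ : Fin 4 → ℚ) (v' w' : V)
    (hcase :
      (d₁ = ![0, 0, 1/2, 1/2] ∧ v' = ((![0, 1, 0, 0] : Fin 4 → ℚ), 0) ∧
        w' = ((![0, 0, 1/2, -(1/2)] : Fin 4 → ℚ), 0)) ∨
      (d₁ = ![1/2, 0, 1/2, 1/2] ∧ v' = ((![0, 1, 1, 0] : Fin 4 → ℚ), 0) ∧
        w' = ((![1/2, 0, 1/2, -(1/2)] : Fin 4 → ℚ), 0)))
    (lam : V)
    (hmem : memL d₁ r lam) (hv : bV lam v = 0) (hv' : bV lam v' = 0)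
    (hpos : 0 < bV lam (w + w' + ((0 : Fin 4 → ℚ), r)))
    (hnorm : -2 ≤ bV lam lam)
    (hω : ∃ ω : Fin 4 → ℂ, OmegaK ω ∧ bKC ω (qc lam.1) = 0) :
    lam = w' - ((0 : Fin 4 → ℚ), r) ∨ lam = -w' - ((0 : Fin 4 → ℚ), r) := by
  obtain ⟨c, rfl, rfl, rfl⟩ :
      ∃ c : ℤ, d₁ = glueK c ∧ v' = isotropicVec c ∧ w' = negOneVec c := by
    rcases hcase with hA | hB
    · exact ⟨0, by simpa [glueK, isotropicVec, negOneVec] using hA⟩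
    · exact ⟨1, by simpa [glueK, isotropicVec, negOneVec] using hB⟩
  exact statement15_general r hr hrr c lam hmem hv hv' hpos hnorm hω

end Stmt15
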